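/- Let β = √((5+√17)/2). Consider the 4×4 real matrix U with rows (2(β²−2)/(β⁴+4), 2(β²+4)/(β⁴+4), −√(β²(β²−2)/(β⁴+4)), −2/√(β²(β²−1)(β⁴+4))), (2(β²+4)/(β⁴+4), β²/(β⁴+4), 2β/√((2β²−1)(β⁴+4)), (β²−1)√(β²−1)/√(β²(β⁴+4))), (−√(β²(β²−2)/(β⁴+4)), 2β/√((2β²−1)(β⁴+4)), 0, √2/β), (−2/√(β²(β²−1)(β⁴+4)), (β²−1)√(β²−1)/√(β²(β⁴+4)), √2/β, −1/(β²−2)). Then U is symmetric and orthogonal; in particular U² is the 4×4 identity matrix. -/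

import Mathlib

namespace AsaedaHaagerupStmt11

noncomputable def beta : ℝ := Real.sqrt ((5 + Real.sqrt 17) / 2)

noncomputable def U : Matrix (Fin 4) (Fin 4) ℝ :=
  !![2 * (beta ^ 2 - 2) / (beta ^ 4 + 4),
       2 * (beta ^ 2 + 4) / (beta ^ 4 + 4),
       -Real.sqrt (beta ^ 2 * (beta ^ 2 - 2) / (beta ^ 4 + 4)),
       -(2 / Real.sqrt (beta ^ 2 * (beta ^ 2 - 1) * (beta ^ 4 + 4)));
     2 * (beta ^ 2 + 4) / (beta ^ 4 + 4),
       beta ^ 2 / (beta ^ 4 + 4),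
       2 * beta / Real.sqrt ((2 * beta ^ 2 - 1) * (beta ^ 4 + 4)),
       (beta ^ 2 - 1) * Real.sqrt (beta ^ 2 - 1) /
         Real.sqrt (beta ^ 2 * (beta ^ 4 + 4));
     -Real.sqrt (beta ^ 2 * (beta ^ 2 - 2) / (beta ^ 4 + 4)),
       2 * beta / Real.sqrt ((2 * beta ^ 2 - 1) * (beta ^ 4 + 4)),
       0, Real.sqrt 2 / beta;
     -(2 / Real.sqrt (beta ^ 2 * (beta ^ 2 - 1) * (beta ^ 4 + 4))),
       (beta ^ 2 - 1) * Real.sqrt (beta ^ 2 - 1) /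
         Real.sqrt (beta ^ 2 * (beta ^ 4 + 4)),
       Real.sqrt 2 / beta, -(1 / (beta ^ 2 - 2))]

/-!
The square roots in `U` all come from one rescaling of the rows and columns. Write `b = β²`, so that
`b² = 5b - 2`, and `w = 2b - 7 > 0`. Since `b² + 4 = b (b - 2) w`, one gets `4w U = D A D` with `A`
a symmetric matrix over `ℤ[b]` and `D` a positive diagonal matrix whose square also has entries in
`ℤ[b]`. The matrix `D A D` is conjugate by `D` to `A D²`, so `U² = 1` reduces to the identity
`(A D²)² = (4w)²`, which holds in every commutative ring containing a root of `b² = 5b - 2`.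
-/

open Matrix

/-- The part of `U` defined over `ℤ[β²]`: up to the factor `4 (2β² - 7)`, the matrix `U` is obtained
from `core (β²)` by scaling rows and columns by `scale`. -/
def core {R : Type*} [CommRing R] (b : R) : Matrix (Fin 4) (Fin 4) R :=
  !![5 - b, 7 * b - 29, -1, b - 5;
     7 * b - 29, b - 3, 10 - 2 * b, b + 1;
     -1, 10 - 2 * b, 0, 2;
     b - 5, b + 1, 2, 1 - b]

/-- The squares of the row and column scalings relating `core (β²)` to `U`; at `b = β²` the last one
is `2 (2b - 7) / b`. -/
def weight {R : Type*} [CommRing R] (b : R) : Fin 4 → R :=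
  ![4, 1, 4 * (2 * b - 7), 7 * b - 31]

/-- The row and column scalings relating `core (β²)` to `U`; all the square roots in the entries of
`U` come from them. -/
noncomputable def scale : Fin 4 → ℝ :=
  ![2, 1, 2 * √(2 * beta ^ 2 - 7), √2 * √(2 * beta ^ 2 - 7) / beta]

section DiagonalScaling

variable {n R : Type*} [Fintype n] [DecidableEq n] [CommRing R]

theorem mem_orthogonalGroup_iff_mul_self_of_isSymm {A : Matrix n n R} (hA : A.IsSymm) :
    A ∈ orthogonalGroup n R ↔ A * A = 1 := by
  rw [mem_orthogonalGroup_iff, hA.eq]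

theorem diagonal_mul_mul_diagonal_mul_self {d : n → R} (hd : IsUnit d) {A : Matrix n n R} {c : R}
    (hA : A * diagonal (d ^ 2) * (A * diagonal (d ^ 2)) = c • 1) :
    diagonal d * A * diagonal d * (diagonal d * A * diagonal d) = c • 1 := by
  have hD : IsUnit (diagonal d) := isUnit_diagonal.2 hd
  have hsq : diagonal (d ^ 2) = diagonal d * diagonal d := by
    rw [sq, diagonal_mul_diagonal]; rfl
  refine hD.mul_right_cancel ?_
  calc diagonal d * A * diagonal d * (diagonal d * A * diagonal d) * diagonal d
      = diagonal d * (A * diagonal (d ^ 2) * (A * diagonal (d ^ 2))) := by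
        simp only [hsq, mul_assoc]
    _ = c • 1 * diagonal d := by rw [hA, mul_smul_one, smul_one_mul]

end DiagonalScaling

theorem core_mul_diagonal_weight_mul_self {R : Type*} [CommRing R] {b : R}
    (hb : b ^ 2 = 5 * b - 2) :
    core b * diagonal (weight b) * (core b * diagonal (weight b)) =
      (4 * (2 * b - 7)) ^ 2 • (1 : Matrix (Fin 4) (Fin 4) R) := by
  ext i j
  fin_cases i <;> fin_cases j <;>
    simp [core, weight, mul_apply, Fin.sum_univ_four, vecMul_diagonal] <;> grind

theorem beta_pos : 0 < beta := Real.sqrt_pos.2 (by positivity)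

theorem beta_sq : beta ^ 2 = (5 + √17) / 2 := Real.sq_sqrt (by positivity)

theorem beta_sq_sq : (beta ^ 2) ^ 2 = 5 * beta ^ 2 - 2 := by
  have h17 : √17 ^ 2 = 17 := Real.sq_sqrt (by norm_num)
  rw [beta_sq]
  linear_combination h17 / 4

theorem four_lt_beta_sq : 4 < beta ^ 2 := by
  have h17 : 4 < √17 := Real.lt_sqrt_of_sq_lt (by norm_num)
  rw [beta_sq]
  linarith

theorem two_mul_beta_sq_sub_seven_pos : 0 < 2 * beta ^ 2 - 7 := by
  linarith [four_lt_beta_sq]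

theorem beta_sq_sub_two_pos : 0 < beta ^ 2 - 2 := by
  linarith [four_lt_beta_sq]

theorem beta_pow_four_add_four :
    beta ^ 4 + 4 = beta ^ 2 * (beta ^ 2 - 2) * (2 * beta ^ 2 - 7) := by
  linear_combination (2 - 2 * beta ^ 2) * beta_sq_sq

theorem sqrt_entry_zero_two :
    √(beta ^ 2 * (beta ^ 2 - 2) / (beta ^ 4 + 4)) = 1 / √(2 * beta ^ 2 - 7) := by
  have hβ := beta_pos.ne'
  have h₂ := beta_sq_sub_two_pos.ne'
  rw [beta_pow_four_add_four, div_mul_cancel_left₀ (by positivity), Real.sqrt_inv, one_div]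

theorem sqrt_entry_zero_three :
    √(beta ^ 2 * (beta ^ 2 - 1) * (beta ^ 4 + 4)) = √2 * beta ^ 3 * √(2 * beta ^ 2 - 7) := by
  have hβ := beta_pos
  have h : beta ^ 2 * (beta ^ 2 - 1) * (beta ^ 4 + 4) =
      2 * (beta ^ 3) ^ 2 * (2 * beta ^ 2 - 7) := by
    grind [beta_sq_sq]
  rw [h, Real.sqrt_mul (by positivity), Real.sqrt_mul (by positivity), Real.sqrt_sq (by positivity)]

theorem sqrt_entry_one_two :
    √((2 * beta ^ 2 - 1) * (beta ^ 4 + 4)) = beta ^ 3 * √(2 * beta ^ 2 - 7) := by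
  have hβ := beta_pos
  have h : (2 * beta ^ 2 - 1) * (beta ^ 4 + 4) = (beta ^ 3) ^ 2 * (2 * beta ^ 2 - 7) := by
    grind [beta_sq_sq]
  rw [h, Real.sqrt_mul (by positivity), Real.sqrt_sq (by positivity)]

theorem entry_one_three :
    (beta ^ 2 - 1) * √(beta ^ 2 - 1) / √(beta ^ 2 * (beta ^ 4 + 4)) =
      (beta ^ 2 - 1) * √2 / (beta * (beta ^ 2 - 2) * √(2 * beta ^ 2 - 7)) := by
  have hβ := beta_pos
  have h₂ := beta_sq_sub_two_pos
  have hw := two_mul_beta_sq_sub_seven_pos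
  have hratio : (beta ^ 2 - 1) / (beta ^ 2 * (beta ^ 4 + 4)) =
      2 / ((beta * (beta ^ 2 - 2)) ^ 2 * (2 * beta ^ 2 - 7)) := by
    rw [beta_pow_four_add_four, div_eq_div_iff (by positivity) (by positivity)]
    linear_combination beta ^ 2 * (beta ^ 2 - 2) * (2 * beta ^ 2 - 7) * beta_sq_sq
  have hsqrt : √(beta ^ 2 - 1) / √(beta ^ 2 * (beta ^ 4 + 4)) =
      √2 / (beta * (beta ^ 2 - 2) * √(2 * beta ^ 2 - 7)) := by
    rw [← Real.sqrt_div' (beta ^ 2 - 1), hratio, Real.sqrt_div zero_le_two,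
      Real.sqrt_mul (by positivity), Real.sqrt_sq (by positivity)]
    positivity
  rw [mul_div_assoc, hsqrt, mul_div_assoc]

theorem isUnit_scale : IsUnit scale := by
  have hβ := beta_pos.ne'
  have hr := (Real.sqrt_pos.2 two_mul_beta_sq_sub_seven_pos).ne'
  refine Pi.isUnit_iff.2 fun i ↦ isUnit_iff_ne_zero.2 ?_
  fin_cases i <;> simp [scale, hβ, hr]

theorem scale_sq : scale ^ 2 = weight (beta ^ 2) := by
  have hβ := beta_pos
  have hr_sq := Real.sq_sqrt two_mul_beta_sq_sub_seven_pos.le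
  ext i
  fin_cases i
  · norm_num [scale, weight]
  · norm_num [scale, weight]
  · norm_num [scale, weight, mul_pow, hr_sq]
  · have h : 2 * (2 * beta ^ 2 - 7) / beta ^ 2 = 7 * beta ^ 2 - 31 := by
      rw [div_eq_iff (by positivity)]
      linear_combination -7 * beta_sq_sq
    simpa [scale, weight, mul_pow, div_pow, hr_sq] using h

theorem U_eq_smul_diagonal_mul_core_mul_diagonal :
    U = (4 * (2 * beta ^ 2 - 7))⁻¹ • (diagonal scale * core (beta ^ 2) * diagonal scale) := by
  have hβ := beta_pos
  have h₂ := beta_sq_sub_two_pos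
  have hw := two_mul_beta_sq_sub_seven_pos
  have hr_sq := Real.sq_sqrt hw.le
  have h2_sq : √2 ^ 2 = (2 : ℝ) := Real.sq_sqrt (by norm_num)
  rw [U, sqrt_entry_zero_two, sqrt_entry_zero_three, sqrt_entry_one_two, entry_one_three,
    beta_pow_four_add_four]
  ext i j
  fin_cases i <;> fin_cases j <;> simp [core, scale] <;> field_simp <;> grind [beta_sq_sq]

theorem isSymm_U : U.IsSymm := by
  ext i j
  fin_cases i <;> fin_cases j <;> rfl

theorem U_mul_self : U * U = 1 := by
  have hc : 4 * (2 * beta ^ 2 - 7) ≠ 0 := (mul_pos four_pos two_mul_beta_sq_sub_seven_pos).ne'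
  have hcore := core_mul_diagonal_weight_mul_self beta_sq_sq
  rw [← scale_sq] at hcore
  rw [U_eq_smul_diagonal_mul_core_mul_diagonal, smul_mul_smul_comm,
    diagonal_mul_mul_diagonal_mul_self isUnit_scale hcore, smul_smul, ← sq, ← mul_pow,
    inv_mul_cancel₀ hc, one_pow, one_smul]

theorem asaeda_haagerup_stmt11 :
    U.IsSymm ∧ U ∈ Matrix.orthogonalGroup (Fin 4) ℝ ∧ U * U = 1 :=
  ⟨isSymm_U, (mem_orthogonalGroup_iff_mul_self_of_isSymm isSymm_U).2 U_mul_self, U_mul_self⟩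

end AsaedaHaagerupStmt11
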